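/- Let L : V → Ṽ be a symplectic linear map, and let v_i, v_j ∈ V be eigenvectors of L*L with eigenvalues λ_i² and λ_j² respectively, where λ_i, λ_j > 0 (i.e. v_i, v_j are singular vectors of L with singular values λ_i, λ_j). Then (λ_i λ_j − 1) · g(J v_i, v_j) = 0. -/

import Mathlib

open scoped RealInnerProductSpace

/-!
The symplectic condition reads `L* J' L = J`. As `L` is invertible and `J`, `J'` square to `-1`,
inverting both sides gives the dual relation `L J L* = J'`. Hence `A = L* L` satisfies
`A J A = L* J' L = J`. Pairing this with the singular vectors gives
`λ_i² λ_j² ⟪J v_i, v_j⟫ = ⟪J v_i, v_j⟫`, and the positive factor `λ_i λ_j + 1` cancels.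
-/

/-- Singular vectors `v_i`, `v_j` of a symplectic map `L` with singular
values `λ_i`, `λ_j` satisfy `(λ_i λ_j − 1) ⟪J v_i, v_j⟫ = 0`. -/
theorem symplectic_singular_vectors_pairing {n : ℕ} {V W : Type*}
    [NormedAddCommGroup V] [InnerProductSpace ℝ V] [FiniteDimensional ℝ V]
    [NormedAddCommGroup W] [InnerProductSpace ℝ W] [FiniteDimensional ℝ W]
    (hV : Module.finrank ℝ V = 2 * n) (hW : Module.finrank ℝ W = 2 * n)
    (J : V →ₗ[ℝ] V) (J' : W →ₗ[ℝ] W)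
    (hJ2 : ∀ v, J (J v) = -v) (hJorth : ∀ u v : V, ⟪J u, J v⟫ = ⟪u, v⟫)
    (hJ'2 : ∀ w, J' (J' w) = -w) (hJ'orth : ∀ u v : W, ⟪J' u, J' v⟫ = ⟪u, v⟫)
    (L : V →ₗ[ℝ] W) (hLbij : Function.Bijective L)
    (hL : ∀ u v : V, ⟪J u, v⟫ = ⟪J' (L u), L v⟫)
    (vi vj : V) (hvi0 : vi ≠ 0) (hvj0 : vj ≠ 0)
    (li lj : ℝ) (hli : 0 < li) (hlj : 0 < lj)
    (hvi : (LinearMap.adjoint L) (L vi) = (li ^ 2) • vi)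
    (hvj : (LinearMap.adjoint L) (L vj) = (lj ^ 2) • vj) :
    (li * lj - 1) * ⟪J vi, vj⟫ = 0 := by
  -- The dual relation `L J L* = J'`: applying `J'`, test both sides against the range of `L`.
  have hdual : ∀ w, L (J (LinearMap.adjoint L w)) = J' w := by
    intro w
    have hzero : J' (L (J (LinearMap.adjoint L w))) + w = 0 := by
      refine ext_inner_right ℝ fun z => ?_
      obtain ⟨u, rfl⟩ := hLbij.2 z
      rw [inner_add_left, ← hL, hJ2, inner_neg_left, LinearMap.adjoint_inner_left,
        inner_zero_left, neg_add_cancel]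
    have h := congrArg J' hzero
    rw [map_add, hJ'2, map_zero] at h
    exact (neg_add_eq_zero.mp h)
  have hAJA : ⟪J (LinearMap.adjoint L (L vi)), LinearMap.adjoint L (L vj)⟫ = ⟪J vi, vj⟫ := by
    rw [LinearMap.adjoint_inner_right, hdual, hL]
  rw [hvi, hvj, map_smul, real_inner_smul_left, real_inner_smul_right] at hAJA
  have hpos : li * lj + 1 ≠ 0 := by positivity
  refine (mul_eq_zero.mp ?_).resolve_left hpos
  linear_combination hAJA
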